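/- Fix constants 0 < Γ₀ ≤ Γ₁, 0 < m₀ ≤ m₁, and u₁ < 1. Then there exist constants C, α > 0 such that for every Γ ∈ [Γ₀, Γ₁], every μ, μ+η, ν ∈ [m₀, m₁], and every u₊ ∈ [u*, u₁] with u* := Γ/(Γ+2), there exists a C¹ solution (û, ê) : ℝ → ℝ² of the system u' = (2μ+η)⁻¹((u−1) + Γ(e/u − e₋)), e' = ν⁻¹((e−e₋) − (u−1)²/2 + (u−1)Γe₋), with e₋ := ((Γ+2)u₊−Γ)/(2Γ(Γ+1)) and e₊ := u₊(Γ+2−Γu₊)/(2Γ(Γ+1)), which connects the endstates with uniform exponential decay: |û(x) − 1| + |ê(x) − e₋| ≤ C e^{αx} for all x ≤ 0, and |û(x) − u₊| + |ê(x) − e₊| ≤ C e^{−αx} for all x ≥ 0. -/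

import Mathlib

/-!
The two nullclines of the profile system are graphs over `u` that meet exactly at the endstates, and
the profile runs between them, monotonically in `u`. Parametrize `u` backwards, from `u₊` to `1`, by
the logistic path whose speed at `u` is the distance `h` between the nullclines. The amount `p` by
which `e` lies below the velocity nullcline then solves a scalar equation antitone in `p`, with
strict barriers `δ h` and `h` that pinch at `-∞`, and this yields an entire solution between them.
Since `δ h ≤ p ≤ h`, the rate at which the profile moves along the path in the original variable is
bounded below by a positive constant explicit in the parameters, so the profile inherits the
exponential decay of the logistic path, uniformly.
-/

open Set Filter Topology
open scoped NNReal RealInnerProductSpace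

section IntegralCurves

variable {E : Type*} [NormedAddCommGroup E] [NormedSpace ℝ E]

theorem exists_isIntegralCurveOn_Icc_of_norm_le [CompleteSpace E] {F : ℝ → E → E} {K : ℝ≥0}
    {a b : ℝ} (hab : a ≤ b) (hF : ∀ x, ContinuousOn (F · x) (Icc a b))
    (hlip : ∀ t ∈ Icc a b, LipschitzWith K (F t)) {g : ℝ → ℝ} (hg : ContinuousOn g (Icc a b))
    (hbound : ∀ t ∈ Icc a b, ∀ x, ‖F t x‖ ≤ g t) (x₀ : E) :
    ∃ p : ℝ → E, p a = x₀ ∧ IsIntegralCurveOn p F (Icc a b) := by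
  obtain ⟨L, hL⟩ := isCompact_Icc.bddAbove_image hg
  have hPL : IsPicardLindelof F (⟨a, left_mem_Icc.2 hab⟩ : Icc a b) x₀
      (L.toNNReal * (b - a).toNNReal) 0 L.toNNReal K :=
    { lipschitzOnWith := fun t ht => (hlip t ht).lipschitzOnWith
      continuousOn := fun x _ => hF x
      norm_le := fun t ht x _ => (hbound t ht x).trans <|
        (hL (mem_image_of_mem g ht)).trans (Real.le_coe_toNNReal L)
      mul_max_le := by simp [hab] }
  exact hPL.exists_eq_forall_mem_Icc_hasDerivWithinAt₀

theorem antitoneOn_norm_sub_of_inner_nonpos {H : Type*} [NormedAddCommGroup H]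
    [InnerProductSpace ℝ H] {F : ℝ → H → H} {s : Set ℝ} (hs : Convex ℝ s)
    (hF : ∀ t ∈ s, ∀ x y, ⟪x - y, F t x - F t y⟫ ≤ 0) {p q : ℝ → H}
    (hp : IsIntegralCurveOn p F s) (hq : IsIntegralCurveOn q F s) :
    AntitoneOn (fun t => ‖p t - q t‖) s := by
  have hderiv : ∀ t ∈ s, HasDerivWithinAt (fun t => ‖p t - q t‖ ^ 2)
      (2 * ⟪p t - q t, F t (p t) - F t (q t)⟫) s t :=
    fun t ht => ((hp t ht).sub (hq t ht)).norm_sq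
  have hsq : AntitoneOn (fun t => ‖p t - q t‖ ^ 2) s :=
    antitoneOn_of_hasDerivWithinAt_nonpos hs (fun t ht => (hderiv t ht).continuousWithinAt)
      (fun t ht => (hderiv t (interior_subset ht)).mono interior_subset)
      fun t ht => mul_nonpos_of_nonneg_of_nonpos zero_le_two (hF t (interior_subset ht) _ _)
  exact fun t ht r hr htr => le_of_sq_le_sq (hsq ht hr htr) (norm_nonneg _)

theorem eventually_mem_Ioo_neg_natCast (t : ℝ) : ∀ᶠ n : ℕ in atTop, t ∈ Ioo (-n : ℝ) n := by
  filter_upwards [(tendsto_natCast_atTop_atTop (R := ℝ)).eventually_gt_atTop |t|] with n hn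
  exact abs_lt.1 hn

theorem exists_isIntegralCurve_of_dist_le [CompleteSpace E] {F : ℝ → E → E} {K : ℝ≥0}
    (hlip : ∀ t, LipschitzWith K (F t)) {p : ℕ → ℝ → E}
    (hp : ∀ n : ℕ, IsIntegralCurveOn (p n) F (Icc (-n) n)) {ε : ℕ → ℝ}
    (hε : Tendsto ε atTop (𝓝 0))
    (hdist : ∀ n m : ℕ, n ≤ m → ∀ t ∈ Icc (-n : ℝ) n, dist (p m t) (p n t) ≤ ε n) :
    ∃ P : ℝ → E, IsIntegralCurve P F ∧ ∀ t, Tendsto (p · t) atTop (𝓝 (P t)) := by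
  have hlim : ∀ t, ∃ y, Tendsto (p · t) atTop (𝓝 y) := fun t => by
    refine cauchySeq_tendsto_of_complete (Metric.cauchySeq_iff'.2 fun r hr => ?_)
    obtain ⟨N, hN, htN⟩ :=
      ((hε.eventually (gt_mem_nhds hr)).and (eventually_mem_Ioo_neg_natCast t)).exists
    exact ⟨N, fun n hn => (hdist N n hn t (Ioo_subset_Icc_self htN)).trans_lt hN⟩
  choose P hP using hlim
  have hPdist : ∀ n : ℕ, ∀ t ∈ Icc (-n : ℝ) n, dist (P t) (p n t) ≤ ε n := fun n t ht =>
    le_of_tendsto ((hP t).dist tendsto_const_nhds)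
      ((eventually_ge_atTop n).mono fun m hm => hdist n m hm t ht)
  refine ⟨P, fun t => ?_, hP⟩
  obtain ⟨N, htN⟩ := (eventually_mem_Ioo_neg_natCast t).exists
  have hmono {n : ℕ} (hn : N ≤ n) : Ioo (-N : ℝ) N ⊆ Ioo (-n : ℝ) n := by
    have : (N : ℝ) ≤ n := by exact_mod_cast hn
    exact Ioo_subset_Ioo (neg_le_neg this) this
  have hunif : TendstoUniformlyOn (fun n s => F s (p n s)) (fun s => F s (P s)) atTop
      (Ioo (-N : ℝ) N) := by
    rw [Metric.tendstoUniformlyOn_iff]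
    intro r hr
    have hKε : Tendsto (fun n => K * ε n) atTop (𝓝 0) := by simpa using hε.const_mul (K : ℝ)
    filter_upwards [hKε.eventually (gt_mem_nhds hr), eventually_ge_atTop N] with n hn hNn s hs
    calc dist (F s (P s)) (F s (p n s)) ≤ K * dist (P s) (p n s) := (hlip s).dist_le_mul _ _
      _ ≤ K * ε n := by gcongr; exact hPdist n s (Ioo_subset_Icc_self (hmono hNn hs))
      _ < r := hn
  refine hasDerivAt_of_tendstoLocallyUniformlyOn isOpen_Ioo hunif.tendstoLocallyUniformlyOn ?_
    (fun s _ => hP s) htN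
  filter_upwards [eventually_ge_atTop N] with n hn s hs
  exact (hp n s (Ioo_subset_Icc_self (hmono hn hs))).hasDerivAt (Icc_mem_nhds_iff.2 (hmono hn hs))

end IntegralCurves

section Barriers

variable {F : ℝ → ℝ → ℝ} {lo lo' hi hi' : ℝ → ℝ}

theorem mem_Icc_of_strict_barriers {p : ℝ → ℝ} {a b : ℝ}
    (hp : IsIntegralCurveOn p F (Icc a b)) (hpa : p a ∈ Icc (lo a) (hi a))
    (hlo : ∀ t ∈ Icc a b, HasDerivAt lo (lo' t) t) (hhi : ∀ t ∈ Icc a b, HasDerivAt hi (hi' t) t)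
    (hlo_lt : ∀ t ∈ Ico a b, lo' t < F t (lo t)) (hhi_lt : ∀ t ∈ Ico a b, F t (hi t) < hi' t) :
    ∀ t ∈ Icc a b, p t ∈ Icc (lo t) (hi t) := by
  have hright : ∀ t ∈ Ico a b, HasDerivWithinAt p (F t (p t)) (Ici t) t := fun t ht =>
    (hp t (Ico_subset_Icc_self ht)).mono_of_mem_nhdsWithin (Icc_mem_nhdsGE_of_mem ht)
  refine fun t ht => ⟨?_, ?_⟩
  · exact image_le_of_deriv_right_lt_deriv_boundary'
      (fun t ht => (hlo t ht).continuousAt.continuousWithinAt)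
      (fun t ht => (hlo t (Ico_subset_Icc_self ht)).hasDerivWithinAt) hpa.1 hp.continuousOn hright
      (fun t ht h => h ▸ hlo_lt t ht) ht
  · exact image_le_of_deriv_right_lt_deriv_boundary' hp.continuousOn hright hpa.2
      (fun t ht => (hhi t ht).continuousAt.continuousWithinAt)
      (fun t ht => (hhi t (Ico_subset_Icc_self ht)).hasDerivWithinAt)
      (fun t ht h => h ▸ hhi_lt t ht) ht

-- Antitonicity keeps the distance between two solutions from growing, so the pinching of the
-- barriers at `-∞` makes the solutions started from `hi (-n)` at time `-n` a Cauchy sequence.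
theorem exists_isIntegralCurve_mem_Icc_of_antitone {K : ℝ≥0} (hF : ∀ x, Continuous (F · x))
    (hlip : ∀ t, LipschitzWith K (F t)) (hanti : ∀ t, Antitone (F t)) {g : ℝ → ℝ}
    (hg : Continuous g) (hbound : ∀ t x, ‖F t x‖ ≤ g t)
    (hlo : ∀ t, HasDerivAt lo (lo' t) t) (hhi : ∀ t, HasDerivAt hi (hi' t) t)
    (hle : ∀ t, lo t ≤ hi t) (hlo_lt : ∀ t, lo' t < F t (lo t))
    (hhi_lt : ∀ t, F t (hi t) < hi' t) (hpinch : Tendsto (hi - lo) atBot (𝓝 0)) :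
    ∃ p : ℝ → ℝ, IsIntegralCurve p F ∧ ∀ t, p t ∈ Icc (lo t) (hi t) := by
  have hlocal : ∀ n : ℕ, ∃ p : ℝ → ℝ, IsIntegralCurveOn p F (Icc (-n) n) ∧
      ∀ t ∈ Icc (-n : ℝ) n, p t ∈ Icc (lo t) (hi t) := fun n => by
    obtain ⟨p, hpn, hp⟩ := exists_isIntegralCurveOn_Icc_of_norm_le
      (neg_le_self n.cast_nonneg) (fun x => (hF x).continuousOn) (fun t _ => hlip t)
      hg.continuousOn (fun t _ => hbound t) (hi (-n))
    exact ⟨p, hp, mem_Icc_of_strict_barriers hp ⟨(hle _).trans hpn.ge, hpn.le⟩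
      (fun t _ => hlo t) (fun t _ => hhi t) (fun t _ => hlo_lt t) fun t _ => hhi_lt t⟩
  choose p hp hmem using hlocal
  have hinner : ∀ t x y, ⟪x - y, F t x - F t y⟫ ≤ 0 := fun t x y => by
    rcases le_total x y with h | h
    · exact mul_nonpos_of_nonneg_of_nonpos (sub_nonneg.2 (hanti t h)) (sub_nonpos.2 h)
    · exact mul_nonpos_of_nonpos_of_nonneg (sub_nonpos.2 (hanti t h)) (sub_nonneg.2 h)
  have hdist : ∀ n m : ℕ, n ≤ m → ∀ t ∈ Icc (-n : ℝ) n,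
      dist (p m t) (p n t) ≤ (hi - lo) (-n) := fun n m hnm t ht => by
    have hsub : Icc (-n : ℝ) n ⊆ Icc (-m : ℝ) m := by
      have : (n : ℝ) ≤ m := by exact_mod_cast hnm
      exact Icc_subset_Icc (neg_le_neg this) this
    have hleft : (-n : ℝ) ∈ Icc (-n : ℝ) n := left_mem_Icc.2 (neg_le_self n.cast_nonneg)
    calc dist (p m t) (p n t) ≤ dist (p m (-n)) (p n (-n)) := by
          simpa only [dist_eq_norm] using antitoneOn_norm_sub_of_inner_nonpos (convex_Icc _ _)
            (fun t _ => hinner t) ((hp m).mono hsub) (hp n) hleft ht ht.1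
      _ ≤ hi (-n) - lo (-n) := Real.dist_le_of_mem_Icc (hmem m _ (hsub hleft)) (hmem n _ hleft)
  have hgap : Tendsto (fun n : ℕ => (hi - lo) (-n)) atTop (𝓝 0) :=
    hpinch.comp (tendsto_neg_atTop_atBot.comp tendsto_natCast_atTop_atTop)
  obtain ⟨P, hP, hlim⟩ := exists_isIntegralCurve_of_dist_le hlip hp hgap hdist
  exact ⟨P, hP, fun t => isClosed_Icc.mem_of_tendsto (hlim t)
    ((eventually_mem_Ioo_neg_natCast t).mono fun n hn => hmem n t (Ioo_subset_Icc_self hn))⟩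

theorem exists_isIntegralCurve_mem_Icc_of_antitoneOn {K : ℝ≥0}
    (hF : ContinuousOn (Function.uncurry F) {z | z.2 ∈ Icc (lo z.1) (hi z.1)})
    (hlip : ∀ t, LipschitzOnWith K (F t) (Icc (lo t) (hi t)))
    (hanti : ∀ t, AntitoneOn (F t) (Icc (lo t) (hi t)))
    (hlo : ∀ t, HasDerivAt lo (lo' t) t) (hhi : ∀ t, HasDerivAt hi (hi' t) t)
    (hle : ∀ t, lo t ≤ hi t) (hlo_lt : ∀ t, lo' t < F t (lo t))
    (hhi_lt : ∀ t, F t (hi t) < hi' t) (hpinch : Tendsto (hi - lo) atBot (𝓝 0)) :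
    ∃ p : ℝ → ℝ, IsIntegralCurve p F ∧ ∀ t, p t ∈ Icc (lo t) (hi t) := by
  have hloc : Continuous lo := continuous_iff_continuousAt.2 fun t => (hlo t).continuousAt
  have hhic : Continuous hi := continuous_iff_continuousAt.2 fun t => (hhi t).continuousAt
  let clamp (t x : ℝ) : ℝ := projIcc (lo t) (hi t) (hle t) x
  have hclamp_mem : ∀ t x, clamp t x ∈ Icc (lo t) (hi t) := fun t x =>
    (projIcc (lo t) (hi t) (hle t) x).2
  have hclamp_eq : ∀ t, ∀ x ∈ Icc (lo t) (hi t), clamp t x = x := fun t x hx =>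
    congrArg Subtype.val (projIcc_of_mem (hle t) hx)
  have hclamp_cont : ∀ x, Continuous (clamp · x) := fun x => by
    simpa only [clamp, coe_projIcc] using hloc.max (hhic.min continuous_const)
  have hlip_clamp : ∀ t, LipschitzWith K fun x => F t (clamp t x) := fun t => by
    have h := (lipschitzOnWith_iff_restrict.1 (hlip t)).comp (LipschitzWith.projIcc (hle t))
    rw [mul_one] at h
    exact h
  have hcont : ∀ {y : ℝ → ℝ}, Continuous y → (∀ t, y t ∈ Icc (lo t) (hi t)) →
      Continuous fun t => F t (y t) := fun {y} hy hmem =>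
    hF.comp_continuous (f := fun t => (t, y t)) (continuous_id.prodMk hy) hmem
  have hlo_mem : ∀ t, lo t ∈ Icc (lo t) (hi t) := fun t => left_mem_Icc.2 (hle t)
  have hbound : ∀ t x, ‖F t (clamp t x)‖ ≤ ‖F t (lo t)‖ + K * (hi t - lo t) := fun t x => by
    refine (norm_le_norm_add_norm_sub (F t (lo t)) _).trans (add_le_add_right ?_ _)
    rw [← dist_eq_norm, dist_comm]
    exact ((hlip t).dist_le_mul _ (hclamp_mem t x) _ (hlo_mem t)).trans <|
      mul_le_mul_of_nonneg_left (Real.dist_le_of_mem_Icc (hclamp_mem t x) (hlo_mem t)) K.2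
  obtain ⟨p, hp, hmem⟩ := exists_isIntegralCurve_mem_Icc_of_antitone
    (F := fun t x => F t (clamp t x))
    (fun x => hcont (hclamp_cont x) fun t => hclamp_mem t x) hlip_clamp
    (fun t x y hxy => hanti t (hclamp_mem t x) (hclamp_mem t y) (monotone_projIcc _ hxy))
    ((hcont hloc hlo_mem).norm.add (continuous_const.mul (hhic.sub hloc))) hbound hlo hhi hle
    (fun t => by rw [hclamp_eq t _ (hlo_mem t)]; exact hlo_lt t)
    (fun t => by rw [hclamp_eq t _ (right_mem_Icc.2 (hle t))]; exact hhi_lt t) hpinch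
  exact ⟨p, fun t => by simpa only [hclamp_eq t _ (hmem t)] using hp t, hmem⟩

end Barriers

theorem exists_isIntegralCurve_autonomous_of_pos {w : ℝ → ℝ} (hw : Continuous w)
    (hpos : ∀ t, 0 < w t) {C : ℝ} (hC : ∀ t, w t ≤ C) :
    ∃ T : ℝ → ℝ, T 0 = 0 ∧ IsIntegralCurve T fun _ => w := by
  have hC0 : 0 < C := (hpos 0).trans_le (hC 0)
  have hv : Continuous fun t => (w t)⁻¹ := hw.inv₀ fun t => (hpos t).ne'
  let X : ℝ → ℝ := fun t => ∫ s in (0 : ℝ)..t, (w s)⁻¹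
  have hX : ∀ t, HasDerivAt X (w t)⁻¹ t := fun t =>
    intervalIntegral.integral_hasDerivAt_right (hv.intervalIntegrable _ _)
      (hv.stronglyMeasurableAtFilter _ _) hv.continuousAt
  have hX0 : X 0 = 0 := intervalIntegral.integral_same
  have hXdiff : Differentiable ℝ X := fun t => (hX t).differentiableAt
  have hmono : StrictMono X :=
    strictMono_of_deriv_pos fun t => (hX t).deriv ▸ inv_pos.2 (hpos t)
  have hgrowth : ∀ ⦃s t⦄, s ≤ t → C⁻¹ * (t - s) ≤ X t - X s :=
    mul_sub_le_image_sub_of_le_deriv hXdiff fun t =>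
      (hX t).deriv ▸ inv_anti₀ (hpos t) (hC t)
  have hsurj : Function.Surjective X := by
    refine hXdiff.continuous.surjective ?_ ?_
    · refine tendsto_atTop_mono' _ ?_ (tendsto_id.const_mul_atTop (inv_pos.2 hC0))
      filter_upwards [eventually_ge_atTop 0] with t ht
      simpa [hX0] using hgrowth ht
    · refine tendsto_atBot_mono' _ ?_ (tendsto_id.const_mul_atBot (inv_pos.2 hC0))
      filter_upwards [eventually_le_atBot 0] with t ht
      simpa [hX0] using hgrowth ht
  let T := (hmono.orderIsoOfSurjective X hsurj).symm
  have hXT : ∀ y, X (T y) = y := (hmono.orderIsoOfSurjective X hsurj).apply_symm_apply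
  refine ⟨T, hmono.injective (by rw [hXT, hX0]), fun y => ?_⟩
  simpa only [inv_inv] using HasDerivAt.of_local_left_inverse T.continuous.continuousAt (hX _)
    (inv_pos.2 (hpos _)).ne' (Eventually.of_forall hXT)

section Relaxation

/-- A source `h a` together with a relaxation of `x > 0` towards the level `h`, of strength `b` and
singular at `x = 0`. -/
noncomputable def relaxationField (h a b x : ℝ) : ℝ := h * (a + b * (h / x - 1))

theorem antitoneOn_relaxationField {h a b : ℝ} (hh : 0 ≤ h) (hb : 0 ≤ b) :
    AntitoneOn (relaxationField h a b) (Ioi 0) := fun x (hx : 0 < x) y _ hxy => by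
  unfold relaxationField
  gcongr

theorem lipschitzOnWith_relaxationField {h a b δ : ℝ} {β : ℝ≥0} (hh : 0 < h) (hb : 0 ≤ b)
    (hb_le : b ≤ β) (hδ : 0 < δ) :
    LipschitzOnWith (β / δ.toNNReal ^ 2) (relaxationField h a b) (Ici (δ * h)) := by
  refine LipschitzOnWith.of_dist_le_mul fun x hx y hy => ?_
  have hpos : ∀ z ∈ Ici (δ * h), 0 < z := fun z hz => (mul_pos hδ hh).trans_le hz
  have hratio : ∀ z ∈ Ici (δ * h), h / z ≤ δ⁻¹ := fun z hz => by
    rw [div_le_iff₀ (hpos z hz), ← div_eq_inv_mul, le_div_iff₀' hδ]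
    exact hz
  have hx_pos := hpos x hx
  have hy_pos := hpos y hy
  calc dist (relaxationField h a b x) (relaxationField h a b y)
      = |b * (h / x) * (h / y) * (y - x)| := by
        rw [Real.dist_eq, relaxationField, relaxationField]
        congr 1
        field_simp
        ring
    _ = b * (h / x) * (h / y) * dist x y := by
        rw [abs_mul, abs_of_nonneg (by positivity), dist_comm, Real.dist_eq]
    _ ≤ β * δ⁻¹ * δ⁻¹ * dist x y := by
        gcongr
        exacts [hratio x hx, hratio y hy]
    _ = ↑(β / δ.toNNReal ^ 2) * dist x y := by
        rw [NNReal.coe_div, NNReal.coe_pow, Real.coe_toNNReal _ hδ.le]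
        field_simp

theorem exists_relaxation_mem_Icc {h a b c : ℝ → ℝ} {δ : ℝ} {β : ℝ≥0} (hδ : 0 < δ)
    (hδ_le : δ ≤ 1) (hh : ∀ s, HasDerivAt h (h s * c s) s) (hpos : ∀ s, 0 < h s)
    (hlim : Tendsto h atBot (𝓝 0)) (ha : Continuous a) (hb : Continuous b)
    (hb_nonneg : ∀ s, 0 ≤ b s) (hb_le : ∀ s, b s ≤ β)
    (hlower : ∀ s, δ * c s < a s + b s * (δ⁻¹ - 1)) (hupper : ∀ s, a s < c s) :
    ∃ p : ℝ → ℝ, IsIntegralCurve p (fun s => relaxationField (h s) (a s) (b s)) ∧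
      ∀ s, p s ∈ Icc (δ * h s) (h s) := by
  have hhc : Continuous h := continuous_iff_continuousAt.2 fun s => (hh s).continuousAt
  have hx_pos : ∀ s, ∀ x ∈ Icc (δ * h s) (h s), 0 < x := fun s x hx =>
    (mul_pos hδ (hpos s)).trans_le hx.1
  have hcont : ContinuousOn (Function.uncurry fun s => relaxationField (h s) (a s) (b s))
      {z | z.2 ∈ Icc (δ * h z.1) (h z.1)} := by
    unfold relaxationField
    refine ContinuousOn.mul (by fun_prop) (ContinuousOn.add (by fun_prop)
      (ContinuousOn.mul (by fun_prop) (ContinuousOn.sub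
        (ContinuousOn.div (by fun_prop) continuousOn_snd fun z hz => ?_) continuousOn_const)))
    exact (hx_pos z.1 z.2 hz).ne'
  refine exists_isIntegralCurve_mem_Icc_of_antitoneOn hcont
    (fun s => (lipschitzOnWith_relaxationField (hpos s) (hb_nonneg s) (hb_le s) hδ).mono
      Icc_subset_Ici_self)
    (fun s => (antitoneOn_relaxationField (hpos s).le (hb_nonneg s)).mono (hx_pos s))
    (fun s => (hh s).const_mul δ) hh (fun s => mul_le_of_le_one_left (hpos s).le hδ_le)
    (fun s => ?_) (fun s => ?_) ?_
  · rw [relaxationField, div_mul_cancel_right₀ (hpos s).ne', mul_left_comm]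
    exact mul_lt_mul_of_pos_left (hlower s) (hpos s)
  · rw [relaxationField, div_self (hpos s).ne', sub_self, mul_zero, add_zero]
    exact mul_lt_mul_of_pos_left (hupper s) (hpos s)
  · have h := hlim.sub (hlim.const_mul δ)
    rw [mul_zero, sub_zero] at h
    exact h

end Relaxation

section Logistic

/-- The solution of the logistic equation `U' = k (b - U) (U - a)` that runs from `a` at `-∞` to
`b` at `+∞` (when `0 < k` and `a < b`) and passes through the midpoint at time `0`. -/
noncomputable def logisticPath (k a b s : ℝ) : ℝ :=
  a + (b - a) * Real.sigmoid (k * (b - a) * s)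

variable {k a b : ℝ}

theorem hasDerivAt_logisticPath (s : ℝ) : HasDerivAt (logisticPath k a b)
    (k * ((b - logisticPath k a b s) * (logisticPath k a b s - a))) s := by
  have hinner : HasDerivAt (fun s => k * (b - a) * s) (k * (b - a)) s := by
    simpa using (hasDerivAt_id s).const_mul (k * (b - a))
  have h := (((Real.hasDerivAt_sigmoid _).comp s hinner).const_mul (b - a)).const_add a
  refine h.congr_deriv ?_
  unfold logisticPath
  ring

theorem logisticPath_mem_Ioo (hab : a < b) (s : ℝ) : logisticPath k a b s ∈ Ioo a b := by
  have hlt := mul_lt_mul_of_pos_left (Real.sigmoid_lt_one (k * (b - a) * s)) (sub_pos.2 hab)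
  have hpos := mul_pos (sub_pos.2 hab) (Real.sigmoid_pos (k * (b - a) * s))
  unfold logisticPath
  constructor <;> linarith

theorem tendsto_logisticPath_atBot (hk : 0 < k) (hab : a < b) :
    Tendsto (logisticPath k a b) atBot (𝓝 a) := by
  have h := ((Real.tendsto_sigmoid_atBot.comp (tendsto_id.const_mul_atBot
    (mul_pos hk (sub_pos.2 hab)))).const_mul (b - a)).const_add a
  rw [mul_zero, add_zero] at h
  exact h

theorem sigmoid_le_exp (x : ℝ) : Real.sigmoid x ≤ Real.exp x := by
  have h := Real.sigmoid_mul_rexp_neg (-x)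
  rw [neg_neg] at h
  rw [← h]
  exact mul_le_of_le_one_left (Real.exp_pos x).le (Real.sigmoid_le_one _)

theorem logisticPath_sub_left_le (hab : a ≤ b) (s : ℝ) :
    logisticPath k a b s - a ≤ (b - a) * Real.exp (k * (b - a) * s) := by
  rw [logisticPath, add_sub_cancel_left]
  exact mul_le_mul_of_nonneg_left (sigmoid_le_exp _) (sub_nonneg.2 hab)

theorem right_sub_logisticPath_le (hab : a ≤ b) (s : ℝ) :
    b - logisticPath k a b s ≤ (b - a) * Real.exp (-(k * (b - a) * s)) := by
  have h : b - logisticPath k a b s = (b - a) * Real.sigmoid (-(k * (b - a) * s)) := by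
    rw [logisticPath, Real.sigmoid_neg]
    ring
  rw [h]
  exact mul_le_mul_of_nonneg_left (sigmoid_le_exp _) (sub_nonneg.2 hab)

end Logistic

namespace ViscousShock

/-- The internal energy `e₋` of the left endstate. -/
noncomputable def eMinus (Γ up : ℝ) : ℝ := ((Γ + 2) * up - Γ) / (2 * Γ * (Γ + 1))

/-- The internal energy `e₊` of the right endstate. -/
noncomputable def ePlus (Γ up : ℝ) : ℝ := up * (Γ + 2 - Γ * up) / (2 * Γ * (Γ + 1))

/-- The right-hand side of the velocity equation; the viscosities enter only through
`D = 2μ + η`. -/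
noncomputable def velocityField (Γ D up u e : ℝ) : ℝ :=
  D⁻¹ * ((u - 1) + Γ * (e / u - eMinus Γ up))

/-- The right-hand side of the energy equation. -/
noncomputable def energyField (Γ ν up u e : ℝ) : ℝ :=
  ν⁻¹ * ((e - eMinus Γ up) - (u - 1) ^ 2 / 2 + (u - 1) * Γ * eMinus Γ up)

/-- `(u, e)` solves the profile system with `D = 2μ + η` and converges to its endstates with
constant `C` and exponential rate `α`. -/
structure IsShockProfile (Γ D ν up C α : ℝ) (u e : ℝ → ℝ) : Prop where
  hasDerivAt_velocity : ∀ x, HasDerivAt u (velocityField Γ D up (u x) (e x)) x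
  hasDerivAt_energy : ∀ x, HasDerivAt e (energyField Γ ν up (u x) (e x)) x
  decay_left : ∀ x ≤ 0, |u x - 1| + |e x - eMinus Γ up| ≤ C * Real.exp (α * x)
  decay_right : ∀ x, 0 ≤ x → |u x - up| + |e x - ePlus Γ up| ≤ C * Real.exp (-α * x)

theorem IsShockProfile.mono {Γ D ν up C C' α α' : ℝ} {u e : ℝ → ℝ}
    (h : IsShockProfile Γ D ν up C α u e) (hC' : 0 ≤ C') (hC : C ≤ C') (hα : α' ≤ α) :
    IsShockProfile Γ D ν up C' α' u e where
  hasDerivAt_velocity := h.hasDerivAt_velocity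
  hasDerivAt_energy := h.hasDerivAt_energy
  decay_left x hx := (h.decay_left x hx).trans <|
    mul_le_mul hC (Real.exp_le_exp.2 (mul_le_mul_of_nonpos_right hα hx)) (Real.exp_pos _).le hC'
  decay_right x hx := (h.decay_right x hx).trans <|
    mul_le_mul hC (Real.exp_le_exp.2 (mul_le_mul_of_nonneg_right (neg_le_neg hα) hx))
      (Real.exp_pos _).le hC'

/-- The value of `e` at which `velocityField` vanishes, as a function of `u`. -/
noncomputable def velocityNullcline (Γ up u : ℝ) : ℝ := u * (eMinus Γ up + (1 - u) / Γ)

/-- The value of `e` at which `energyField` vanishes, as a function of `u`. -/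
noncomputable def energyNullcline (Γ up u : ℝ) : ℝ :=
  eMinus Γ up + (u - 1) ^ 2 / 2 - (u - 1) * Γ * eMinus Γ up

/-- The vertical distance between the two nullclines, which meet exactly at the endstates. -/
noncomputable def nullclineGap (Γ up u : ℝ) : ℝ :=
  velocityNullcline Γ up u - energyNullcline Γ up u

section Nullclines

variable {Γ D ν up u e w p : ℝ}

theorem velocityField_velocityNullcline_sub (hΓ : Γ ≠ 0) (hu : u ≠ 0) :
    velocityField Γ D up u (velocityNullcline Γ up u - p) = -(Γ * p / (D * u)) := by
  unfold velocityField velocityNullcline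
  field_simp
  ring

theorem energyField_velocityNullcline_sub :
    energyField Γ ν up u (velocityNullcline Γ up u - p) = ν⁻¹ * (nullclineGap Γ up u - p) := by
  unfold energyField nullclineGap energyNullcline
  ring

theorem energyNullcline_one : energyNullcline Γ up 1 = eMinus Γ up := by
  simp [energyNullcline]

theorem energyNullcline_right (hΓ : 0 < Γ) : energyNullcline Γ up up = ePlus Γ up := by
  unfold energyNullcline eMinus ePlus
  field_simp
  ring

theorem nullclineGap_eq (hΓ : 0 < Γ) :
    nullclineGap Γ up u = (Γ + 2) / (2 * Γ) * ((1 - u) * (u - up)) := by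
  unfold nullclineGap velocityNullcline energyNullcline eMinus
  field_simp
  ring

theorem hasDerivAt_velocityNullcline (u : ℝ) :
    HasDerivAt (velocityNullcline Γ up) (eMinus Γ up + (1 - 2 * u) / Γ) u := by
  have h := (hasDerivAt_id u).mul
    ((((hasDerivAt_id u).const_sub 1).div_const Γ).const_add (eMinus Γ up))
  refine h.congr_deriv ?_
  simp only [id]
  ring

theorem hasDerivAt_energyNullcline (u : ℝ) :
    HasDerivAt (energyNullcline Γ up) (u - 1 - Γ * eMinus Γ up) u := by
  have hsub := (hasDerivAt_id u).sub_const 1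
  have h := (((hsub.pow 2).div_const 2).const_add (eMinus Γ up)).sub
    ((hsub.mul_const Γ).mul_const (eMinus Γ up))
  refine h.congr_deriv ?_
  simp only [id]
  ring

theorem hasDerivAt_nullclineGap (u : ℝ) : HasDerivAt (nullclineGap Γ up)
    (eMinus Γ up + (1 - 2 * u) / Γ - (u - 1 - Γ * eMinus Γ up)) u :=
  (hasDerivAt_velocityNullcline u).sub (hasDerivAt_energyNullcline u)

theorem eMinus_nonneg (hΓ : 0 < Γ) (hup : Γ / (Γ + 2) ≤ up) : 0 ≤ eMinus Γ up := by
  have := (div_le_iff₀' (by positivity)).1 hup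
  exact div_nonneg (by linarith) (by positivity)

theorem mul_eMinus_le_one (hΓ : 0 < Γ) (hup : up ≤ 1) : Γ * eMinus Γ up ≤ 1 := by
  have : (Γ + 2) * up ≤ (Γ + 2) * 1 := by gcongr
  rw [eMinus, ← mul_div_assoc, div_le_one (by positivity)]
  nlinarith

theorem nullclineGap_le_mul_abs_sub (hΓ : 0 < Γ) (hup : 0 ≤ up) (hu : u ∈ Icc up 1)
    (hw : w = up ∨ w = 1) : nullclineGap Γ up u ≤ (1 / 2 + 1 / Γ) * |u - w| := by
  have hslope : (Γ + 2) / (2 * Γ) = 1 / 2 + 1 / Γ := by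
    field_simp
  rw [nullclineGap_eq hΓ, hslope]
  have hleft := sub_nonneg.2 hu.1
  have hright := sub_nonneg.2 hu.2
  gcongr
  rcases hw with rfl | rfl
  · exact (mul_le_of_le_one_left hleft (by linarith)).trans (le_abs_self _)
  · rw [abs_sub_comm]
    exact (mul_le_of_le_one_right hright (by linarith [hu.2])).trans (le_abs_self _)

theorem abs_energyNullcline_sub_le (hΓ : 0 < Γ) (hup : up ∈ Icc (Γ / (Γ + 2)) 1)
    (hu : u ∈ Icc 0 1) (hw : w ∈ Icc 0 1) :
    |energyNullcline Γ up u - energyNullcline Γ up w| ≤ 2 * |u - w| := by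
  have hfactor : energyNullcline Γ up u - energyNullcline Γ up w =
      ((u + w) / 2 - 1 - Γ * eMinus Γ up) * (u - w) := by
    unfold energyNullcline
    ring
  have hem := mul_nonneg hΓ.le (eMinus_nonneg hΓ hup.1)
  have hem_le := mul_eMinus_le_one hΓ hup.2
  rw [hfactor, abs_mul]
  gcongr
  exact abs_le.2 ⟨by linarith [hu.1, hw.1], by linarith [hu.2, hw.2]⟩

theorem abs_sub_add_abs_sub_energyNullcline_le (hΓ : 0 < Γ) (hup : up ∈ Icc (Γ / (Γ + 2)) 1)
    (hu : u ∈ Icc up 1) (he : e ∈ Icc (energyNullcline Γ up u) (velocityNullcline Γ up u))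
    (hw : w = up ∨ w = 1) :
    |u - w| + |e - energyNullcline Γ up w| ≤ (7 / 2 + 1 / Γ) * |u - w| := by
  have hup_nonneg : 0 ≤ up := (by positivity : 0 ≤ Γ / (Γ + 2)).trans hup.1
  have hw_mem : w ∈ Icc 0 1 := by
    rcases hw with rfl | rfl
    exacts [⟨hup_nonneg, hup.2⟩, ⟨zero_le_one, le_rfl⟩]
  have hgap : |e - energyNullcline Γ up u| ≤ (1 / 2 + 1 / Γ) * |u - w| := by
    rw [abs_of_nonneg (sub_nonneg.2 he.1)]
    exact (sub_le_sub_right he.2 _).trans (nullclineGap_le_mul_abs_sub hΓ hup_nonneg hu hw)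
  have hN := abs_energyNullcline_sub_le hΓ hup ⟨hup_nonneg.trans hu.1, hu.2⟩ hw_mem
  linarith [abs_sub_le e (energyNullcline Γ up u) (energyNullcline Γ up w)]

end Nullclines

/-- The logistic path from `u = up` to `u = 1` whose speed at `u` is `nullclineGap Γ up u`. A shock
profile traverses it backwards, with another clock. -/
noncomputable def velocityPath (Γ up : ℝ) : ℝ → ℝ := logisticPath ((Γ + 2) / (2 * Γ)) up 1

/-- The distance between the two nullclines along `velocityPath`. -/
noncomputable def pathGap (Γ up s : ℝ) : ℝ := nullclineGap Γ up (velocityPath Γ up s)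

/-- `p s` is the amount by which a shock profile lies below the velocity nullcline when its
velocity is `velocityPath Γ up s`: dividing the two profile equations eliminates `x` and leaves
this scalar equation. The bounds keep the profile between the nullclines, at a distance from the
upper one that is comparable to `pathGap`. -/
structure IsVelocityDefect (Γ D ν up δ : ℝ) (p : ℝ → ℝ) : Prop where
  isIntegralCurve : IsIntegralCurve p fun s => relaxationField (pathGap Γ up s)
    (eMinus Γ up + (1 - 2 * velocityPath Γ up s) / Γ) (D * velocityPath Γ up s / (ν * Γ))
  mem_Icc : ∀ s, p s ∈ Icc (δ * pathGap Γ up s) (pathGap Γ up s)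

/-- The rate `-ds/dx` at which a shock profile with velocity defect `p` moves along
`velocityPath`. -/
noncomputable def clockSpeed (Γ D up : ℝ) (p : ℝ → ℝ) (s : ℝ) : ℝ :=
  Γ * p s / (D * velocityPath Γ up s * pathGap Γ up s)

section Construction

variable {Γ D ν up δ : ℝ}

theorem velocityPath_mem_Ioo (hup : up < 1) (s : ℝ) : velocityPath Γ up s ∈ Ioo up 1 :=
  logisticPath_mem_Ioo hup s

theorem hasDerivAt_velocityPath (hΓ : 0 < Γ) (s : ℝ) :
    HasDerivAt (velocityPath Γ up) (pathGap Γ up s) s := by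
  rw [pathGap, nullclineGap_eq hΓ]
  exact hasDerivAt_logisticPath s

theorem continuous_velocityPath (hΓ : 0 < Γ) : Continuous (velocityPath Γ up) :=
  continuous_iff_continuousAt.2 fun s => (hasDerivAt_velocityPath hΓ s).continuousAt

theorem hasDerivAt_pathGap (hΓ : 0 < Γ) (s : ℝ) : HasDerivAt (pathGap Γ up)
    (pathGap Γ up s * (eMinus Γ up + (1 - 2 * velocityPath Γ up s) / Γ -
      (velocityPath Γ up s - 1 - Γ * eMinus Γ up))) s := by
  rw [mul_comm]
  exact (hasDerivAt_nullclineGap _).comp s (hasDerivAt_velocityPath hΓ s)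

theorem continuous_pathGap (hΓ : 0 < Γ) : Continuous (pathGap Γ up) :=
  continuous_iff_continuousAt.2 fun s => (hasDerivAt_pathGap hΓ s).continuousAt

theorem pathGap_pos (hΓ : 0 < Γ) (hup : up < 1) (s : ℝ) :
    0 < pathGap Γ up s := by
  obtain ⟨hleft, hright⟩ := velocityPath_mem_Ioo (Γ := Γ) hup s
  rw [pathGap, nullclineGap_eq hΓ]
  exact mul_pos (by positivity) (mul_pos (sub_pos.2 hright) (sub_pos.2 hleft))

theorem tendsto_pathGap_atBot (hΓ : 0 < Γ) (hup : up < 1) :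
    Tendsto (pathGap Γ up) atBot (𝓝 0) := by
  have hgap : nullclineGap Γ up up = 0 := by rw [nullclineGap_eq hΓ, sub_self, mul_zero, mul_zero]
  rw [← hgap]
  exact (hasDerivAt_nullclineGap up).continuousAt.tendsto.comp
    (tendsto_logisticPath_atBot (by positivity) hup)

theorem velocityDefect_lower_barrier {u : ℝ} (hΓ : 0 < Γ) (hD : 0 < D) (hν : 0 < ν)
    (hup : up ∈ Ico (Γ / (Γ + 2)) 1) (hδ : 0 < δ) (hδ_le : δ ≤ 1 / 2)
    (hδ_le' : δ * (ν * (1 + 3 * Γ)) ≤ D * up) (hu : u ∈ Icc up 1) :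
    δ * (eMinus Γ up + (1 - 2 * u) / Γ - (u - 1 - Γ * eMinus Γ up)) <
      eMinus Γ up + (1 - 2 * u) / Γ + D * u / (ν * Γ) * (δ⁻¹ - 1) := by
  have hup_pos : 0 < up := (by positivity : 0 < Γ / (Γ + 2)).trans_le hup.1
  have hem := eMinus_nonneg hΓ hup.1
  have hem_le := mul_eMinus_le_one hΓ hup.2.le
  have hslope : -(1 / Γ) ≤ eMinus Γ up + (1 - 2 * u) / Γ := by
    have h : -1 / Γ ≤ (1 - 2 * u) / Γ := by
      gcongr
      linarith [hu.2]
    linarith [neg_div Γ 1]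
  have hcoupling : (1 / Γ + 3) * (1 - δ) ≤ D * u / (ν * Γ) * (δ⁻¹ - 1) := by
    have hδ_inv : δ⁻¹ - 1 = δ⁻¹ * (1 - δ) := by field_simp
    rw [hδ_inv, ← mul_assoc]
    refine mul_le_mul_of_nonneg_right ?_ (by linarith)
    rw [← div_eq_mul_inv, le_div_iff₀ hδ, le_div_iff₀ (by positivity)]
    calc (1 / Γ + 3) * δ * (ν * Γ) = δ * (ν * (1 + 3 * Γ)) := by field_simp
      _ ≤ D * u := hδ_le'.trans (mul_le_mul_of_nonneg_left hu.1 hD.le)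
  have hsource : δ * (1 - u + Γ * eMinus Γ up) ≤ 1 / 2 * 2 := by
    have := sub_nonneg.2 hu.2
    gcongr
    linarith [hu.1]
  nlinarith

theorem exists_isVelocityDefect (hΓ : 0 < Γ) (hD : 0 < D) (hν : 0 < ν)
    (hup : up ∈ Ico (Γ / (Γ + 2)) 1) (hδ : 0 < δ) (hδ_le : δ ≤ 1 / 2)
    (hδ_le' : δ * (ν * (1 + 3 * Γ)) ≤ D * up) : ∃ p, IsVelocityDefect Γ D ν up δ p := by
  have hup_pos : 0 < up := (by positivity : 0 < Γ / (Γ + 2)).trans_le hup.1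
  have hem := mul_nonneg hΓ.le (eMinus_nonneg hΓ hup.1)
  have hUc := continuous_velocityPath (up := up) hΓ
  have hU := velocityPath_mem_Ioo (Γ := Γ) hup.2
  have hb_nonneg : ∀ s, 0 ≤ D * velocityPath Γ up s / (ν * Γ) := fun s => by
    have := hup_pos.trans (hU s).1
    positivity
  have hb_le : ∀ s, D * velocityPath Γ up s / (ν * Γ) ≤ (D / (ν * Γ)).toNNReal := fun s => by
    refine le_trans ?_ (Real.le_coe_toNNReal _)
    gcongr
    exact mul_le_of_le_one_right hD.le (hU s).2.le
  obtain ⟨p, hp, hmem⟩ := exists_relaxation_mem_Icc hδ (by linarith) (hasDerivAt_pathGap hΓ)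
    (pathGap_pos hΓ hup.2) (tendsto_pathGap_atBot hΓ hup.2)
    (a := fun s => eMinus Γ up + (1 - 2 * velocityPath Γ up s) / Γ) (by fun_prop) (by fun_prop)
    hb_nonneg hb_le
    (fun s => velocityDefect_lower_barrier hΓ hD hν hup hδ hδ_le hδ_le'
      (Ioo_subset_Icc_self (hU s)))
    (fun s => by linarith [(hU s).2])
  exact ⟨p, hp, hmem⟩

variable {p T : ℝ → ℝ}

theorem IsVelocityDefect.exists_clock (hp : IsVelocityDefect Γ D ν up δ p) (hΓ : 0 < Γ)
    (hD : 0 < D) (hup : up ∈ Ioo 0 1) (hδ : 0 < δ) :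
    ∃ T : ℝ → ℝ, T 0 = 0 ∧ (∀ y, HasDerivAt T (clockSpeed Γ D up p (T y)) y) ∧
      ∀ ⦃y z⦄, y ≤ z → δ * Γ / D * (z - y) ≤ T z - T y := by
  have hU := velocityPath_mem_Ioo (Γ := Γ) hup.2
  have hU_pos : ∀ s, 0 < velocityPath Γ up s := fun s => hup.1.trans (hU s).1
  have hgap := pathGap_pos hΓ hup.2
  have hcont : Continuous (clockSpeed Γ D up p) :=
    (continuous_const.mul (continuous_iff_continuousAt.2 fun s =>
      (hp.isIntegralCurve s).continuousAt)).div₀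
      ((continuous_const.mul (continuous_velocityPath hΓ)).mul (continuous_pathGap hΓ))
      fun s => (mul_pos (mul_pos hD (hU_pos s)) (hgap s)).ne'
  have hge : ∀ s, δ * Γ / D ≤ clockSpeed Γ D up p s := fun s => by
    have := hU_pos s
    have := hgap s
    rw [clockSpeed, div_le_div_iff₀ hD (by positivity)]
    calc δ * Γ * (D * velocityPath Γ up s * pathGap Γ up s)
        = Γ * (velocityPath Γ up s * (δ * pathGap Γ up s)) * D := by ring
      _ ≤ Γ * (1 * p s) * D := by
          have := (hU s).2.le
          have := (hp.mem_Icc s).1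
          gcongr
      _ = Γ * p s * D := by rw [one_mul]
  have hle : ∀ s, clockSpeed Γ D up p s ≤ Γ / (D * up) := fun s => by
    have := hup.1
    have := hgap s
    have := (hU s).1.le
    have := (hp.mem_Icc s).2
    calc clockSpeed Γ D up p s ≤ Γ * pathGap Γ up s / (D * up * pathGap Γ up s) := by
          unfold clockSpeed
          gcongr
      _ = Γ / (D * up) := mul_div_mul_right _ _ (hgap s).ne'
  obtain ⟨T, hT0, hT⟩ := exists_isIntegralCurve_autonomous_of_pos hcont
    (fun s => (by positivity : 0 < δ * Γ / D).trans_le (hge s)) hle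
  exact ⟨T, hT0, hT, mul_sub_le_image_sub_of_le_deriv (fun y => (hT y).differentiableAt)
    fun y => (hT y).deriv ▸ hge _⟩

/-- The velocity of the profile obtained from the clock `T`; the reflection in `x` makes it run from
`1` down to `up`. -/
noncomputable def profileVelocity (Γ up : ℝ) (T : ℝ → ℝ) (x : ℝ) : ℝ := velocityPath Γ up (T (-x))

/-- The energy of the profile obtained from the defect `p` and the clock `T`. -/
noncomputable def profileEnergy (Γ up : ℝ) (p T : ℝ → ℝ) (x : ℝ) : ℝ :=
  velocityNullcline Γ up (profileVelocity Γ up T x) - p (T (-x))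

theorem hasDerivAt_profileVelocity (hΓ : 0 < Γ) (hup : up ∈ Ioo 0 1)
    (hT : ∀ y, HasDerivAt T (clockSpeed Γ D up p (T y)) y) (x : ℝ) :
    HasDerivAt (profileVelocity Γ up T)
      (velocityField Γ D up (profileVelocity Γ up T x) (profileEnergy Γ up p T x)) x := by
  have hgap := (pathGap_pos hΓ hup.2 (T (-x))).ne'
  have hU := hup.1.trans (velocityPath_mem_Ioo (Γ := Γ) hup.2 (T (-x))).1
  have h := (hasDerivAt_velocityPath (up := up) hΓ (T (-x))).comp x
    ((hT (-x)).comp x (hasDerivAt_neg x))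
  refine h.congr_deriv ?_
  rw [profileEnergy, profileVelocity, velocityField_velocityNullcline_sub hΓ.ne' hU.ne',
    clockSpeed]
  field_simp

theorem IsVelocityDefect.hasDerivAt_profileEnergy (hp : IsVelocityDefect Γ D ν up δ p)
    (hΓ : 0 < Γ) (hD : 0 < D) (hup : up ∈ Ioo 0 1) (hδ : 0 < δ)
    (hT : ∀ y, HasDerivAt T (clockSpeed Γ D up p (T y)) y) (x : ℝ) :
    HasDerivAt (profileEnergy Γ up p T)
      (energyField Γ ν up (profileVelocity Γ up T x) (profileEnergy Γ up p T x)) x := by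
  have hgap := pathGap_pos hΓ hup.2 (T (-x))
  have hU := hup.1.trans (velocityPath_mem_Ioo (Γ := Γ) hup.2 (T (-x))).1
  have hp_pos := (mul_pos hδ hgap).trans_le (hp.mem_Icc (T (-x))).1
  have htime := (hT (-x)).comp x (hasDerivAt_neg x)
  have hvelocity : HasDerivAt (profileVelocity Γ up T)
      (pathGap Γ up (T (-x)) * (clockSpeed Γ D up p (T (-x)) * -1)) x :=
    (hasDerivAt_velocityPath hΓ (T (-x))).comp x htime
  have h := ((hasDerivAt_velocityNullcline (Γ := Γ) (up := up) _).comp x hvelocity).sub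
    ((hp.isIntegralCurve (T (-x))).comp x htime)
  refine h.congr_deriv ?_
  simp only [profileEnergy, energyField_velocityNullcline_sub, clockSpeed, relaxationField,
    profileVelocity]
  rw [← pathGap]
  field_simp
  ring

theorem IsVelocityDefect.profileEnergy_mem_Icc (hp : IsVelocityDefect Γ D ν up δ p) (hΓ : 0 < Γ)
    (hup : up < 1) (hδ : 0 < δ) (x : ℝ) :
    profileEnergy Γ up p T x ∈ Icc (energyNullcline Γ up (profileVelocity Γ up T x))
      (velocityNullcline Γ up (profileVelocity Γ up T x)) := by
  have hp_nonneg := (mul_pos hδ (pathGap_pos hΓ hup (T (-x)))).le.trans (hp.mem_Icc _).1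
  have hp_le := (hp.mem_Icc (T (-x))).2
  rw [pathGap, nullclineGap, ← profileVelocity] at hp_le
  exact ⟨by unfold profileEnergy; linarith, sub_le_self _ hp_nonneg⟩

theorem one_sub_profileVelocity_le {c : ℝ} (hΓ : 0 < Γ) (hup : up ∈ Icc 0 1) (hT0 : T 0 = 0)
    (hgrowth : ∀ ⦃y z⦄, y ≤ z → c * (z - y) ≤ T z - T y) {x : ℝ} (hx : x ≤ 0) :
    1 - profileVelocity Γ up T x ≤ Real.exp ((Γ + 2) / (2 * Γ) * (1 - up) * c * x) := by
  have hup' := sub_nonneg.2 hup.2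
  have hT := hgrowth (neg_nonneg.2 hx)
  rw [hT0] at hT
  calc 1 - profileVelocity Γ up T x
      ≤ (1 - up) * Real.exp (-((Γ + 2) / (2 * Γ) * (1 - up) * T (-x))) :=
        right_sub_logisticPath_le hup.2 _
    _ ≤ 1 * Real.exp (-((Γ + 2) / (2 * Γ) * (1 - up) * (c * -x))) := by
        gcongr <;> linarith [hup.1]
    _ = Real.exp ((Γ + 2) / (2 * Γ) * (1 - up) * c * x) := by
        rw [one_mul]
        congr 1
        ring

theorem profileVelocity_sub_le {c : ℝ} (hΓ : 0 < Γ) (hup : up ∈ Icc 0 1) (hT0 : T 0 = 0)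
    (hgrowth : ∀ ⦃y z⦄, y ≤ z → c * (z - y) ≤ T z - T y) {x : ℝ} (hx : 0 ≤ x) :
    profileVelocity Γ up T x - up ≤ Real.exp (-((Γ + 2) / (2 * Γ) * (1 - up) * c) * x) := by
  have hup' := sub_nonneg.2 hup.2
  have hT := hgrowth (neg_nonpos.2 hx)
  rw [hT0] at hT
  calc profileVelocity Γ up T x - up
      ≤ (1 - up) * Real.exp ((Γ + 2) / (2 * Γ) * (1 - up) * T (-x)) :=
        logisticPath_sub_left_le hup.2 _
    _ ≤ 1 * Real.exp ((Γ + 2) / (2 * Γ) * (1 - up) * (c * -x)) := by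
        gcongr <;> linarith [hup.1]
    _ = Real.exp (-((Γ + 2) / (2 * Γ) * (1 - up) * c) * x) := by
        rw [one_mul]
        congr 1
        ring

theorem IsVelocityDefect.isShockProfile {c : ℝ} (hp : IsVelocityDefect Γ D ν up δ p) (hΓ : 0 < Γ)
    (hD : 0 < D) (hup : up ∈ Ico (Γ / (Γ + 2)) 1) (hδ : 0 < δ) (hT0 : T 0 = 0)
    (hT : ∀ y, HasDerivAt T (clockSpeed Γ D up p (T y)) y)
    (hgrowth : ∀ ⦃y z⦄, y ≤ z → c * (z - y) ≤ T z - T y) :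
    IsShockProfile Γ D ν up (7 / 2 + 1 / Γ) ((Γ + 2) / (2 * Γ) * (1 - up) * c)
      (profileVelocity Γ up T) (profileEnergy Γ up p T) := by
  have hup_pos : 0 < up := (by positivity : 0 < Γ / (Γ + 2)).trans_le hup.1
  have hup_mem : up ∈ Icc 0 1 := ⟨hup_pos.le, hup.2.le⟩
  have hmem : ∀ x, profileVelocity Γ up T x ∈ Icc up 1 := fun x =>
    Ioo_subset_Icc_self (velocityPath_mem_Ioo hup.2 _)
  have hclose : ∀ x w, w = up ∨ w = 1 →
      |profileVelocity Γ up T x - w| + |profileEnergy Γ up p T x - energyNullcline Γ up w| ≤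
        (7 / 2 + 1 / Γ) * |profileVelocity Γ up T x - w| := fun x w =>
    abs_sub_add_abs_sub_energyNullcline_le hΓ (Ico_subset_Icc_self hup) (hmem x)
      (hp.profileEnergy_mem_Icc hΓ hup.2 hδ x)
  refine ⟨hasDerivAt_profileVelocity hΓ ⟨hup_pos, hup.2⟩ hT,
    hp.hasDerivAt_profileEnergy hΓ hD ⟨hup_pos, hup.2⟩ hδ hT, fun x hx => ?_, fun x hx => ?_⟩
  · rw [← energyNullcline_one]
    refine (hclose x 1 (Or.inr rfl)).trans ?_
    rw [abs_sub_comm, abs_of_nonneg (sub_nonneg.2 (hmem x).2)]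
    gcongr
    exact one_sub_profileVelocity_le hΓ hup_mem hT0 hgrowth hx
  · rw [← energyNullcline_right hΓ]
    refine (hclose x up (Or.inl rfl)).trans ?_
    rw [abs_of_nonneg (sub_nonneg.2 (hmem x).1)]
    gcongr
    exact profileVelocity_sub_le hΓ hup_mem hT0 hgrowth hx

theorem exists_isShockProfile {ρ : ℝ} (hΓ : 0 < Γ) (hD : 0 < D) (hν : 0 < ν)
    (hup : up ∈ Ico (Γ / (Γ + 2)) 1) (hρ : 0 < ρ) (hρD : ρ * D ≤ 1 / 2)
    (hρν : ρ * (ν * (1 + 3 * Γ)) ≤ up) :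
    ∃ u e, IsShockProfile Γ D ν up (7 / 2 + 1 / Γ) ((Γ + 2) / 2 * (1 - up) * ρ) u e := by
  have hup_pos : 0 < up := (by positivity : 0 < Γ / (Γ + 2)).trans_le hup.1
  have hδ : 0 < ρ * D := mul_pos hρ hD
  obtain ⟨p, hp⟩ := exists_isVelocityDefect hΓ hD hν hup hδ hρD <| by
    rw [mul_comm ρ, mul_assoc]
    exact mul_le_mul_of_nonneg_left hρν hD.le
  obtain ⟨T, hT0, hT, hgrowth⟩ := hp.exists_clock hΓ hD ⟨hup_pos, hup.2⟩ hδ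
  have hrate : (Γ + 2) / (2 * Γ) * (1 - up) * (ρ * D * Γ / D) = (Γ + 2) / 2 * (1 - up) * ρ := by
    field_simp
  exact ⟨_, _, hrate ▸ hp.isShockProfile hΓ hD hup hδ hT0 hT hgrowth⟩

end Construction

end ViscousShock

open ViscousShock

theorem profile_existence_uniform_decay_general {Γ₀ M u₁ : ℝ} (hΓ₀ : 0 < Γ₀) (hM : 0 < M)
    (hu₁ : u₁ < 1) :
    ∃ C α : ℝ, 0 < C ∧ 0 < α ∧
      ∀ Γ D ν up : ℝ, Γ₀ ≤ Γ → D ∈ Ioc 0 M → ν ∈ Ioc 0 M → up ∈ Icc (Γ / (Γ + 2)) u₁ →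
        ∃ u e : ℝ → ℝ, IsShockProfile Γ D ν up C α u e := by
  have hgap : 0 < 1 - u₁ := sub_pos.2 hu₁
  set ρ := min (1 / (2 * M)) (Γ₀ * (1 - u₁) ^ 2 / (12 * M))
  have hρ : 0 < ρ := lt_min (by positivity) (by positivity)
  refine ⟨7 / 2 + 1 / Γ₀, (1 - u₁) * ρ, by positivity, by positivity,
    fun Γ D ν up hΓ₀_le hD hν hup => ?_⟩
  have hΓ : 0 < Γ := hΓ₀.trans_le hΓ₀_le
  have hinv : (1 - u₁) / 2 ≤ 1 / (Γ + 2) := by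
    have h : 1 - Γ / (Γ + 2) = 2 * (1 / (Γ + 2)) := by field_simp; ring
    linarith [hup.1.trans hup.2]
  have hρD : ρ * D ≤ 1 / 2 := by
    calc ρ * D ≤ 1 / (2 * M) * M := by
          gcongr
          exacts [hD.1.le, min_le_left _ _, hD.2]
      _ = 1 / 2 := by field_simp
  have hρν : ρ * (ν * (1 + 3 * Γ)) ≤ up := by
    calc ρ * (ν * (1 + 3 * Γ)) ≤ Γ₀ * (1 - u₁) ^ 2 / (12 * M) * (M * (3 * (Γ + 2))) := by
          have := hν.1
          gcongr
          exacts [min_le_right _ _, hν.2, by linarith]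
      _ = Γ₀ * (Γ + 2) * ((1 - u₁) / 2) ^ 2 := by field_simp; ring
      _ ≤ Γ * (Γ + 2) * (1 / (Γ + 2)) ^ 2 := by gcongr
      _ = Γ / (Γ + 2) := by field_simp
      _ ≤ up := hup.1
  obtain ⟨u, e, h⟩ :=
    exists_isShockProfile hΓ hD.1 hν.1 ⟨hup.1, hup.2.trans_lt hu₁⟩ hρ hρD hρν
  refine ⟨u, e, h.mono (by positivity) (by gcongr) ?_⟩
  gcongr
  exact (by linarith [hup.2] : 1 - u₁ ≤ 1 - up).trans
    (le_mul_of_one_le_left (by linarith [hup.2]) (by linarith))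

/-- **Uniform existence and exponential decay of viscous shock profiles**
(Humpherys–Lyng–Zumbrun). For parameters `Γ ∈ [Γ₀,Γ₁]`, `μ, μ+η, ν ∈ [m₀,m₁]`, and
`u₊ ∈ [u*, u₁]` with `u* = Γ/(Γ+2)`, there exists a solution `(û, ê)` of the rescaled
profile ODE connecting `(1, e₋)` at `−∞` to `(u₊, e₊)` at `+∞`, with exponential decay
rates uniform in all parameters. -/
theorem profile_existence_uniform_decay
    (Γ₀ Γ₁ m₀ m₁ u₁ : ℝ) (hΓ₀ : 0 < Γ₀) (hΓ : Γ₀ ≤ Γ₁)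
    (hm₀ : 0 < m₀) (hm : m₀ ≤ m₁) (hu₁ : u₁ < 1) :
    ∃ C α : ℝ, 0 < C ∧ 0 < α ∧
      ∀ Γ μ η ν up : ℝ,
        Γ ∈ Set.Icc Γ₀ Γ₁ →
        μ ∈ Set.Icc m₀ m₁ → μ + η ∈ Set.Icc m₀ m₁ → ν ∈ Set.Icc m₀ m₁ →
        up ∈ Set.Icc (Γ / (Γ + 2)) u₁ →
        ∃ u e : ℝ → ℝ,
          (∀ x : ℝ, HasDerivAt u
            ((2 * μ + η)⁻¹ * ((u x - 1) +
              Γ * (e x / u x - ((Γ + 2) * up - Γ) / (2 * Γ * (Γ + 1))))) x) ∧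
          (∀ x : ℝ, HasDerivAt e
            (ν⁻¹ * ((e x - ((Γ + 2) * up - Γ) / (2 * Γ * (Γ + 1)))
              - (u x - 1) ^ 2 / 2 +
              (u x - 1) * Γ * (((Γ + 2) * up - Γ) / (2 * Γ * (Γ + 1))))) x) ∧
          (∀ x : ℝ, x ≤ 0 →
            |u x - 1| + |e x - ((Γ + 2) * up - Γ) / (2 * Γ * (Γ + 1))|
              ≤ C * Real.exp (α * x)) ∧
          (∀ x : ℝ, 0 ≤ x →
            |u x - up| + |e x - up * (Γ + 2 - Γ * up) / (2 * Γ * (Γ + 1))|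
              ≤ C * Real.exp (-α * x)) := by
  obtain ⟨C, α, hC, hα, h⟩ :=
    profile_existence_uniform_decay_general hΓ₀ (by linarith : 0 < 2 * m₁) hu₁
  refine ⟨C, α, hC, hα, fun Γ μ η ν up hΓ hμ hμη hν hup => ?_⟩
  obtain ⟨u, e, hue⟩ := h Γ (2 * μ + η) ν up hΓ.1
    ⟨by linarith [hμ.1, hμη.1], by linarith [hμ.2, hμη.2]⟩
    ⟨by linarith [hν.1], by linarith [hν.2]⟩ hup
  exact ⟨u, e, hue.hasDerivAt_velocity, hue.hasDerivAt_energy, hue.decay_left, hue.decay_right⟩
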